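/- arXiv:2105.07449 — 2 statements merged into one kernel-verified Lean document; each statement's English description precedes it below -/
import Mathlib

section
/- Fix finite nonempty supports A_1,…,A_k ⊆ ℕ^n such that every α ∈ A_j has all coordinates ≥ 1 (so x_1⋯x_n divides each f_j). There exists a nonzero polynomial G in the coefficients c = (c_{j,α}) and the data u such that whenever G(c,u) ≠ 0, for every nonzero w ∈ ℤ^{n+k} the initial system init_w(L(F)) = (init_w(ℓ_1),…,init_w(ℓ_n), init_w(f_1),…,init_w(f_k)) has no solutions in (ℂ*)^{n+k}. -/
/-!
Write `e_s = α + e_j` for the exponent of the monomial `λ_j x^α` belonging to the index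
`s = (j, α)`, and let `Q` be the set of those `s` at which `⟨w, e_s⟩` is minimal and `≤ 0`. Since
all exponents are `≥ 1`, for nonzero coefficients and data every `ℓ_i` has the same support
`{0} ∪ {e_s}`, so a solution `y` in the torus of the initial system satisfies, with
`b_s = c_s y^{e_s}`,

* `Σ_{s ∈ Q} α_i b_s = u_i` for all `i` if all weights `⟨w, e_s⟩` are `≥ 0`, and
  `Σ_{s ∈ Q} α_i b_s = 0` for all `i` otherwise;
* `Σ_{s ∈ Q, s.1 = j} b_s = 0` for all `j`.

These equations depend on `w` only through finitely many combinatorial choices, so it suffices to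
treat each choice separately.

* If some weight is negative, `b` lies in the kernel of the matrix whose columns are the `e_s`,
  `s ∈ Q` (`generic_neg`). This says that the Cayley polynomial `Σ_{s ∈ Q} c_s y^{e_s}` has a
  singular point in the torus.
* If all weights are `≥ 0` and `w` has a nonzero `x`-part, then `⟨w, e_s⟩ = 0` on `Q`, and Euler's
  relation gives `Σ_i w_i u_i = 0`. A single such `w` is chosen for each `Q` (`generic_lin_class`).
* If all weights are `≥ 0` and `w` has zero `x`-part, then `x` is a common zero of all `f_j` while
  `u` is a combination of logarithmic gradients of the `f_j` with `j` in a proper subset `J`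
  (`generic_zero`).

The first and third cases are excluded by a dimension count, `generic_torus`: the coefficient
vectors `t` for which `(t_s y^{β_s})_s` lies in a subspace `W` for some `y` in the torus are
polynomially parametrized by `dim W + rank β` parameters, one fewer if `β` has the all-ones vector
in its row space, because scaling `W` is then already accounted for by the torus. With fewer
parameters than coordinates, the coordinates of the parametrization are algebraically dependent,
and a relation among them is the required polynomial.
-/

open MvPolynomial

/-- The polynomial `ℓ_i = u_i - x_i · Σ_j λ_j ∂f_j/∂x_i` of the ML system,
as an element of `ℂ[x_1,…,x_n,λ_1,…,λ_k]` (variables indexed by `Fin n ⊕ Fin k`). -/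
noncomputable def mlEll (n k : ℕ) (f : Fin k → MvPolynomial (Fin n) ℂ)
    (u : Fin n → ℂ) (i : Fin n) : MvPolynomial (Fin n ⊕ Fin k) ℂ :=
  C (u i) - X (Sum.inl i) *
    ∑ j : Fin k, X (Sum.inr j) * rename Sum.inl (pderiv i (f j))

/-- The solution set of the ML system `L(F)` in `ℂ^n × ℂ^k`. -/
def mlSol (n k : ℕ) (f : Fin k → MvPolynomial (Fin n) ℂ) (u : Fin n → ℂ) :
    Set ((Fin n → ℂ) × (Fin k → ℂ)) :=
  {p | (∀ i, eval (Sum.elim p.1 p.2) (mlEll n k f u i) = 0) ∧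
       (∀ j, eval p.1 (f j) = 0)}

/-- The Newton polytope of a multivariate polynomial. -/
noncomputable def newt {σ : Type*} (f : MvPolynomial σ ℂ) : Set (σ → ℝ) :=
  convexHull ℝ ((fun d : σ →₀ ℕ => fun i => ((d i : ℕ) : ℝ)) '' ↑f.support)

/-- `⟨w, x⟩` for an integer weight vector `w`. -/
def wdot {σ : Type*} [Fintype σ] (w : σ → ℤ) (x : σ → ℝ) : ℝ :=
  ∑ i, (w i : ℝ) * x i

/-- The face of `P` exposed by `w`. -/
def faceOf {σ : Type*} [Fintype σ] (w : σ → ℤ) (P : Set (σ → ℝ)) : Set (σ → ℝ) :=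
  {x ∈ P | ∀ y ∈ P, wdot w x ≤ wdot w y}

/-- `val_w(P) = min_{x ∈ P} ⟨w,x⟩`. -/
noncomputable def valOf {σ : Type*} [Fintype σ] (w : σ → ℤ) (P : Set (σ → ℝ)) : ℝ :=
  sInf (wdot w '' P)

/-- The initial polynomial `init_w(f)`: the sum of the terms of `f` whose
exponent vectors minimize `⟨w,·⟩` over the support of `f`. -/
noncomputable def initw {σ : Type*} [Fintype σ] (w : σ → ℤ) (f : MvPolynomial σ ℂ) :
    MvPolynomial σ ℂ :=
  ∑ d ∈ f.support.filter
      (fun d => ∀ d' ∈ f.support, ∑ i, w i * (d i : ℤ) ≤ ∑ i, w i * (d' i : ℤ)),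
    monomial d (coeff d f)

/-- The sparse polynomial with support `A` and coefficients `c`. -/
noncomputable def sparsePoly (n : ℕ) (A : Finset (Fin n →₀ ℕ)) (c : (Fin n →₀ ℕ) → ℂ) :
    MvPolynomial (Fin n) ℂ :=
  ∑ α ∈ A, monomial α (c α)

/-! ### Generic properties -/

/-- `P` holds off the zero set of some nonzero polynomial. -/
def Generic {σ : Type*} (P : (σ → ℂ) → Prop) : Prop :=
  ∃ G : MvPolynomial σ ℂ, G ≠ 0 ∧ ∀ t, eval t G ≠ 0 → P t

namespace Generic

lemma mono {σ : Type*} {P Q : (σ → ℂ) → Prop} (h : Generic P) (hPQ : ∀ t, P t → Q t) :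
    Generic Q := by
  obtain ⟨G, hG, h⟩ := h
  exact ⟨G, hG, fun t ht => hPQ t (h t ht)⟩

lemma and {σ : Type*} {P Q : (σ → ℂ) → Prop} (hP : Generic P) (hQ : Generic Q) :
    Generic (fun t => P t ∧ Q t) := by
  obtain ⟨G, hG, h⟩ := hP
  obtain ⟨H, hH, h'⟩ := hQ
  refine ⟨G * H, mul_ne_zero hG hH, fun t ht => ?_⟩
  rw [map_mul] at ht
  exact ⟨h t (left_ne_zero_of_mul ht), h' t (right_ne_zero_of_mul ht)⟩

lemma all {σ τ : Type*} [Finite τ] {P : τ → (σ → ℂ) → Prop} (h : ∀ i, Generic (P i)) :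
    Generic (fun t => ∀ i, P i t) := by
  have := Fintype.ofFinite τ
  choose G hG h using h
  refine ⟨∏ i, G i, Finset.prod_ne_zero_iff.2 fun i _ => hG i, fun t ht i => ?_⟩
  rw [map_prod, Finset.prod_ne_zero_iff] at ht
  exact h i t (ht i (Finset.mem_univ i))

lemma imp {σ : Type*} {p : Prop} {P : (σ → ℂ) → Prop} (h : p → Generic P) :
    Generic (fun t => p → P t) := by
  by_cases hp : p
  · exact (h hp).mono fun _ ht _ => ht
  · exact ⟨1, one_ne_zero, fun _ _ hp' => absurd hp' hp⟩

lemma comp {σ τ : Type*} {P : (τ → ℂ) → Prop} (h : Generic P) {e : τ → σ}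
    (he : Function.Injective e) : Generic (fun t : σ → ℂ => P (t ∘ e)) := by
  obtain ⟨G, hG, h⟩ := h
  refine ⟨rename e G, (map_ne_zero_iff _ (rename_injective e he)).2 hG, fun t ht => h _ ?_⟩
  rwa [eval_rename] at ht

lemma coord_ne_zero {σ : Type*} (i : σ) : Generic (fun t : σ → ℂ => t i ≠ 0) :=
  ⟨X i, X_ne_zero i, fun t ht => by simpa using ht⟩

end Generic

/-! ### Dimension count on a torus -/

/-- More polynomials than variables are algebraically dependent. -/
lemma exists_relation {S τ : Type} [Fintype S] [Fintype τ]
    (hc : Fintype.card τ < Fintype.card S) (P : S → MvPolynomial τ ℂ) :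
    ∃ g : MvPolynomial S ℂ, g ≠ 0 ∧ aeval P g = 0 := by
  by_contra! hcon
  have hai : AlgebraicIndependent ℂ P := by
    rw [algebraicIndependent_iff]
    intro p hp
    by_contra h
    exact hcon p h hp
  have h := hai.cardinalMk_le_trdeg
  rw [MvPolynomial.trdeg_of_isDomain] at h
  simp only [Cardinal.mk_fintype, Cardinal.lift_natCast, Nat.cast_le] at h
  omega

/-- For generic `t` there is no torus point `y` with `(t_s y^{β_s})_s ∈ W`, provided `dim W` plus
the dimension of the row space of `β` enlarged by the all-ones vector is at most the number of
coordinates. On logarithms, the torus acts on the coordinates through the row space of `β`; in a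
basis of the enlarged row space that contains `1`, the coordinate along `1` only rescales `W`, so
`dim W` together with the remaining basis vectors leaves fewer parameters than coordinates. -/
lemma generic_torus {S ι : Type} [Fintype S] [Nonempty S] [Fintype ι]
    (W : Submodule ℂ (S → ℂ)) (β : ι → S → ℕ)
    (hdim : Module.finrank ℂ W + Module.finrank ℂ (Submodule.span ℂ
      (insert (1 : S → ℂ) (Set.range fun i s => (β i s : ℂ)))) ≤ Fintype.card S) :
    Generic (fun t : S → ℂ => ∀ y : ι → ℂ, (∀ i, y i ≠ 0) →
      (fun s => t s * ∏ i, y i ^ β i s) ∉ W) := by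
  classical
  set row : ι → S → ℂ := fun i s => (β i s : ℂ) with hrow
  obtain ⟨b, hbt, h1b, hspan, hli⟩ :=
    exists_linearIndepOn_id_extension (K := ℂ) (s := {(1 : S → ℂ)})
      (t := insert (1 : S → ℂ) (Set.range row)) (by simp) (by simp)
  have h1b : (1 : S → ℂ) ∈ b := h1b rfl
  have hbfin : b.Finite := ((Set.finite_range row).insert 1).subset hbt
  have := hbfin.fintype
  have hspan' : Submodule.span ℂ b =
      Submodule.span ℂ (insert (1 : S → ℂ) (Set.range row)) :=
    le_antisymm (Submodule.span_mono hbt) (Submodule.span_le.2 hspan)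
  rw [← hspan', finrank_span_set_eq_card hli] at hdim
  -- `κ` indexes the torus parameters; the basis vector `1` is absorbed into `W`.
  let κ := {v : S → ℂ // v ∈ b.toFinset.erase 1}
  have hκ : Fintype.card κ + 1 = b.toFinset.card := by
    rw [Fintype.card_coe]
    exact Finset.card_erase_add_one (by simpa using h1b)
  have hidx : ∀ v : κ, ∃ i, row i = v.1 := by
    rintro ⟨v, hv⟩
    have hv' : v ≠ 1 ∧ v ∈ b := by simpa using hv
    rcases hbt hv'.2 with h | h
    · exact absurd h hv'.1
    · exact h
  choose idx hidx using hidx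
  let B := Module.finBasis ℂ W
  -- The torus variables stand for inverses of coordinates, so that no negative exponent occurs.
  let P : S → MvPolynomial (Fin (Module.finrank ℂ W) ⊕ κ) ℂ := fun s =>
    (∑ l, C ((B l : S → ℂ) s) * X (Sum.inl l)) * ∏ v : κ, X (Sum.inr v) ^ β (idx v) s
  obtain ⟨g, hg, hgP⟩ := exists_relation (by
    rw [Fintype.card_sum, Fintype.card_fin]; omega) P
  refine ⟨g, hg, fun t ht y hy hW => ht ?_⟩
  -- `y = exp z`, and `z` may be replaced by its coordinates along the basis `b`.
  let z : ι → ℂ := fun i => Complex.log (y i)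
  have hz : ∀ i, Complex.exp (z i) = y i := fun i => Complex.exp_log (hy i)
  have hzmem : (∑ i, z i • row i) ∈ Submodule.span ℂ ((b.toFinset : Finset (S → ℂ)) : Set _) := by
    rw [Set.coe_toFinset, hspan']
    exact Submodule.sum_mem _ fun i _ => Submodule.smul_mem _ _
      (Submodule.subset_span (Set.mem_insert_of_mem _ ⟨i, rfl⟩))
  obtain ⟨ζ, -, hζ⟩ := Submodule.mem_span_finset.1 hzmem
  have hprod : ∀ s, ∏ i, y i ^ β i s =
      Complex.exp (ζ 1) * ∏ v : κ, Complex.exp (ζ v.1) ^ β (idx v) s := by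
    intro s
    have e1 : ∏ i, y i ^ β i s = Complex.exp ((∑ i, z i • row i) s) := by
      rw [Finset.sum_apply, Complex.exp_sum]
      refine Finset.prod_congr rfl fun i _ => ?_
      rw [← hz i, ← Complex.exp_nat_mul]
      simp [hrow, mul_comm]
    rw [e1, ← hζ, ← Finset.add_sum_erase _ _ (by simpa using h1b : (1 : S → ℂ) ∈ b.toFinset),
      Pi.add_apply, Complex.exp_add, ← Finset.sum_coe_sort, Finset.sum_apply, Complex.exp_sum]
    congr 1
    · simp
    · refine Finset.prod_congr rfl fun v _ => ?_
      rw [← Complex.exp_nat_mul, ← hidx v]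
      simp [hrow, mul_comm]
  let v : W := ⟨_, hW⟩
  let q : Fin (Module.finrank ℂ W) ⊕ κ → ℂ :=
    Sum.elim (fun l => Complex.exp (-ζ 1) * B.repr v l) (fun x => Complex.exp (-ζ x.1))
  have hq : ∀ s, eval q (P s) = t s := by
    intro s
    have e2 : ∑ l, (B l : S → ℂ) s * B.repr v l = t s * ∏ i, y i ^ β i s := by
      have h := congrArg (fun a : W => (a : S → ℂ) s) (B.sum_repr v)
      simp only [Submodule.coe_sum, Submodule.coe_smul, Finset.sum_apply, Pi.smul_apply,
        smul_eq_mul] at h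
      rw [show t s * ∏ i, y i ^ β i s = (v : S → ℂ) s from rfl, ← h]
      exact Finset.sum_congr rfl fun l _ => mul_comm _ _
    have e3 : eval q (P s) = Complex.exp (-ζ 1) * (∑ l, (B l : S → ℂ) s * B.repr v l) *
        ∏ x : κ, Complex.exp (-ζ x.1) ^ β (idx x) s := by
      simp only [P, q, map_mul, map_sum, map_prod, map_pow, eval_C, eval_X, Sum.elim_inl,
        Sum.elim_inr, Finset.mul_sum]
      congr 1
      exact Finset.sum_congr rfl fun l _ => by ring
    rw [e3, e2, hprod]
    have e4 : (∏ x : κ, Complex.exp (ζ x.1) ^ β (idx x) s) *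
        ∏ x : κ, Complex.exp (-ζ x.1) ^ β (idx x) s = 1 := by
      rw [← Finset.prod_mul_distrib]
      refine Finset.prod_eq_one fun x _ => ?_
      rw [← mul_pow, ← Complex.exp_add]; simp
    have e5 : Complex.exp (-ζ 1) * Complex.exp (ζ 1) = 1 := by
      rw [← Complex.exp_add]; simp
    calc _ = t s * (Complex.exp (-ζ 1) * Complex.exp (ζ 1)) *
        ((∏ x : κ, Complex.exp (ζ x.1) ^ β (idx x) s) *
        ∏ x : κ, Complex.exp (-ζ x.1) ^ β (idx x) s) := by ring
      _ = t s := by rw [e4, e5]; ring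
  have h0 := congrArg (eval q) hgP
  rw [map_zero] at h0
  rw [← h0, MvPolynomial.aeval_def, ← MvPolynomial.coe_eval₂Hom, ← RingHom.comp_apply]
  rw [show (eval t) = (eval q).comp (eval₂Hom (algebraMap ℂ _) P) from ?_]
  refine MvPolynomial.ringHom_ext (fun r => ?_) (fun s => ?_)
  · simp [MvPolynomial.algebraMap_eq]
  · simp [hq]

/-- If the all-ones vector is a combination of the rows of `β`, then `Σ_s t_s y^{β_s}` has no
singular point in the torus for generic `t`: the kernel and the row space of `β` have
complementary dimensions. -/
lemma generic_ker {S ι : Type} [Fintype S] [Nonempty S] [Fintype ι]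
    (β : ι → S → ℕ) (h1 : (1 : S → ℂ) ∈ Submodule.span ℂ (Set.range fun i s => (β i s : ℂ))) :
    Generic (fun t : S → ℂ => ∀ y : ι → ℂ, (∀ i, y i ≠ 0) →
      ¬ ∀ i, ∑ s, (β i s : ℂ) * (t s * ∏ i, y i ^ β i s) = 0) := by
  classical
  let M : Matrix ι S ℂ := Matrix.of fun i s => (β i s : ℂ)
  refine (generic_torus (LinearMap.ker M.mulVecLin) β ?_).mono fun t ht y hy h => ht y hy ?_
  · rw [Submodule.span_insert_eq_span h1]
    have e1 := M.rank_eq_finrank_span_row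
    have e2 := M.mulVecLin.finrank_range_add_finrank_ker
    rw [Module.finrank_fintype_fun_eq_card] at e2
    change _ + Module.finrank ℂ (Submodule.span ℂ (Set.range M.row)) ≤ _
    rw [← e1, Matrix.rank]
    omega
  · rw [LinearMap.mem_ker]
    funext i
    exact h i

/-! ### Initial forms and the exponents of the ML system -/

/-- Initial form of a polynomial given as a sum of nonzero terms with distinct exponents. -/
lemma eval_initw {σ T : Type*} [Fintype σ] [Fintype T] (w : σ → ℤ) (D : T → σ →₀ ℕ)
    (hD : Function.Injective D) (a : T → ℂ) (ha : ∀ t, a t ≠ 0) (p : σ → ℂ)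
    [DecidablePred fun t => ∀ t', ∑ i, w i * (D t i : ℤ) ≤ ∑ i, w i * (D t' i : ℤ)] :
    eval p (initw w (∑ t, monomial (D t) (a t))) =
      ∑ t with ∀ t', ∑ i, w i * (D t i : ℤ) ≤ ∑ i, w i * (D t' i : ℤ),
        a t * ∏ i, p i ^ D t i := by
  classical
  set f := ∑ t, monomial (D t) (a t) with hf
  have hcoeff : ∀ t, coeff (D t) f = a t := fun t => by
    rw [hf, coeff_sum, Finset.sum_eq_single t]
    · simp
    · intro b _ hb
      rw [coeff_monomial, if_neg (fun h => hb (hD h))]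
    · simp
  have hsupp : ∀ d, d ∈ f.support ↔ ∃ t, D t = d := by
    intro d
    constructor
    · intro h
      by_contra! hcon
      rw [mem_support_iff, hf, coeff_sum] at h
      refine h (Finset.sum_eq_zero fun t _ => ?_)
      rw [coeff_monomial, if_neg (hcon t)]
    · rintro ⟨t, rfl⟩
      rw [mem_support_iff, hcoeff]
      exact ha t
  rw [initw, map_sum]
  refine (Finset.sum_bij (fun t _ => D t) ?_ ?_ ?_ ?_).symm
  · intro t ht
    rw [Finset.mem_filter] at ht ⊢
    refine ⟨(hsupp _).2 ⟨t, rfl⟩, fun d' hd' => ?_⟩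
    obtain ⟨t', rfl⟩ := (hsupp _).1 hd'
    exact ht.2 t'
  · intro s _ t _ h
    exact hD h
  · intro d hd
    rw [Finset.mem_filter] at hd
    obtain ⟨t, rfl⟩ := (hsupp _).1 hd.1
    exact ⟨t, by
      rw [Finset.mem_filter]
      exact ⟨Finset.mem_univ _, fun t' => hd.2 _ ((hsupp _).2 ⟨t', rfl⟩)⟩, rfl⟩
  · intro t _
    rw [hcoeff, eval_monomial, Finsupp.prod_fintype _ _ (by simp)]

/-- The index set of all coefficients: pairs `(j, α)` with `α ∈ A j`. -/
abbrev Idx {n k : ℕ} (A : Fin k → Finset (Fin n →₀ ℕ)) : Type := Σ j : Fin k, {α // α ∈ A j}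

section
variable {n k : ℕ} {A : Fin k → Finset (Fin n →₀ ℕ)}

/-- The exponent of the monomial `λ_j x^α` for `s = (j, α)`. -/
noncomputable def expo (s : Idx A) : Fin n ⊕ Fin k →₀ ℕ :=
  Finsupp.mapDomain Sum.inl s.2.1 + Finsupp.single (Sum.inr s.1) 1

lemma expo_inl (s : Idx A) (i : Fin n) : expo s (Sum.inl i) = s.2.1 i := by
  simp [expo, Finsupp.mapDomain_apply Sum.inl_injective]

lemma expo_inr (s : Idx A) (j : Fin k) : expo s (Sum.inr j) = if s.1 = j then 1 else 0 := by
  simp [expo, Finsupp.mapDomain_of_notMem_range, Finsupp.single_apply]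

lemma expo_injective : Function.Injective (expo (A := A)) := by
  rintro ⟨j, α, hα⟩ ⟨j', α', hα'⟩ h
  obtain rfl : j = j' := by
    have h1 := DFunLike.congr_fun h (Sum.inr j)
    rw [expo_inr, expo_inr] at h1
    by_contra hne
    simp [Ne.symm hne] at h1
  obtain rfl : α = α' := by
    ext i
    have h1 := DFunLike.congr_fun h (Sum.inl i)
    rwa [expo_inl, expo_inl] at h1
  rfl

lemma sum_expo (w : Fin n ⊕ Fin k → ℤ) (s : Idx A) :
    ∑ i, w i * (expo s i : ℤ) = ∑ i, w (Sum.inl i) * (s.2.1 i : ℤ) + w (Sum.inr s.1) := by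
  simp [Fintype.sum_sum_type, expo_inl, expo_inr]

lemma prod_expo (p : Fin n ⊕ Fin k → ℂ) (s : Idx A) :
    ∏ i, p i ^ expo s i = (∏ i, p (Sum.inl i) ^ s.2.1 i) * p (Sum.inr s.1) := by
  simp [Fintype.prod_sum_type, expo_inl, expo_inr, pow_ite]

/-- Expansion of `ℓ_i` into terms; `none` is the constant term `u_i`. The bound `1 ≤ α i` prevents
truncation of the exponent in the derivative. -/
lemma mlEll_eq (hA1 : ∀ j, ∀ α ∈ A j, ∀ i, 1 ≤ α i) (c : Fin k → (Fin n →₀ ℕ) → ℂ)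
    (u : Fin n → ℂ) (i : Fin n) :
    mlEll n k (fun j => sparsePoly n (A j) (c j)) u i =
      ∑ o : Option (Idx A), monomial (o.elim 0 expo)
        (o.elim (u i) fun s => -((s.2.1 i : ℂ) * c s.1 s.2.1)) := by
  rw [Fintype.sum_option, Fintype.sum_sigma, mlEll, Finset.mul_sum, sub_eq_add_neg,
    ← Finset.sum_neg_distrib]
  congr 1
  refine Finset.sum_congr rfl fun j _ => ?_
  rw [sparsePoly, map_sum, map_sum, Finset.mul_sum, Finset.mul_sum, ← Finset.sum_neg_distrib,
    ← Finset.sum_coe_sort]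
  refine Finset.sum_congr rfl fun α _ => ?_
  have hα := hA1 j α.1 α.2 i
  have hexp : (Finsupp.single (Sum.inl i) 1 + (Finsupp.single (Sum.inr j) 1 +
      Finsupp.mapDomain Sum.inl (α.1 - Finsupp.single i 1)) : Fin n ⊕ Fin k →₀ ℕ) =
      expo (A := A) ⟨j, α⟩ := by
    ext x
    rcases x with x | x
    · rw [expo_inl]
      simp only [Finsupp.add_apply, Finsupp.mapDomain_apply Sum.inl_injective,
        Finsupp.tsub_apply, Finsupp.single_apply, Sum.inl.injEq, reduceCtorEq, if_false]
      split_ifs with h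
      · subst h; omega
      · omega
    · rw [expo_inr]
      simp [Finsupp.mapDomain_of_notMem_range, Finsupp.single_apply]
  simp only [Option.elim, pderiv_monomial, rename_monomial, map_neg]
  rw [X, X, monomial_mul, monomial_mul, hexp, one_mul, one_mul, mul_comm (c _ _)]

lemma sparse_eq (c : (Fin n →₀ ℕ) → ℂ) (j : Fin k) :
    (rename Sum.inl (sparsePoly n (A j) c) : MvPolynomial (Fin n ⊕ Fin k) ℂ) =
      ∑ α : {α // α ∈ A j}, monomial (Finsupp.mapDomain Sum.inl α.1) (c α.1) := by
  rw [sparsePoly, map_sum, ← Finset.sum_coe_sort]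
  simp [rename_monomial]

/-! ### The three types of initial systems -/

/-- Initial systems of weights that are negative on some `λ_j x^α`. -/
lemma generic_neg (Q : Finset (Idx A)) (hQ : Q.Nonempty) :
    Generic (fun t : Idx A → ℂ => ∀ y : Fin n ⊕ Fin k → ℂ, (∀ i, y i ≠ 0) →
      ¬ ∀ i, ∑ s ∈ Q, (expo s i : ℂ) * (t s * ∏ i, y i ^ expo s i) = 0) := by
  have := hQ.coe_sort
  refine ((generic_ker (S := Q) (fun i s => expo s.1 i) ?_).comp
    (e := fun s => s.1) Subtype.val_injective).mono fun t ht y hy h => ht y hy fun i => ?_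
  -- Each index lies in exactly one block, so the rows of the `λ_j` sum to `1`.
  · have : (1 : Q → ℂ) = ∑ j : Fin k, fun s : Q => (expo s.1 (Sum.inr j) : ℂ) := by
      funext s
      simp [expo_inr]
    rw [this]
    exact Submodule.sum_mem _ fun j _ => Submodule.subset_span ⟨Sum.inr j, rfl⟩
  · rw [← h i]
    exact Finset.sum_coe_sort Q fun s => (expo s i : ℂ) * (t s * ∏ i, y i ^ expo s i)

lemma generic_lin (w : Fin n → ℤ) (hw : w ≠ 0) :
    Generic (fun u : Fin n → ℂ => ∑ i, (w i : ℂ) * u i ≠ 0) := by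
  obtain ⟨i, hi⟩ := Function.ne_iff.1 hw
  refine ⟨∑ i, C (w i : ℂ) * X i, fun h => hi ?_, fun u hu => by simpa using hu⟩
  have h := congrArg (eval (Pi.single i (1 : ℂ))) h
  simpa [Pi.single_apply] using h

/-- Initial systems of nonnegative weights with nonzero `x`-part. The genericity condition involves
one chosen `w` for each `Q`, hence only finitely many in total. -/
lemma generic_lin_class (Q : Finset (Idx A)) :
    Generic (fun u : Fin n → ℂ => (∃ w : Fin n ⊕ Fin k → ℤ, (∃ i, w (Sum.inl i) ≠ 0) ∧
        ∀ s ∈ Q, ∑ i, w i * (expo s i : ℤ) = 0) → ∀ b : Idx A → ℂ,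
      (∀ j : Fin k, ∑ s ∈ Q, (expo s (Sum.inr j) : ℂ) * b s = 0) →
      ¬ ∀ i : Fin n, u i = ∑ s ∈ Q, (expo s (Sum.inl i) : ℂ) * b s) := by
  refine Generic.imp ?_
  rintro ⟨w, ⟨i, hi⟩, hw⟩
  refine (generic_lin (fun i => w (Sum.inl i)) (fun h => hi (congrFun h i))).mono
    fun u hu b hj hi => hu ?_
  -- Euler's relation for a form that is homogeneous of weight `0`.
  have h1 : ∑ i, (w (Sum.inl i) : ℂ) * u i +
      ∑ j, (w (Sum.inr j) : ℂ) * ∑ s ∈ Q, (expo s (Sum.inr j) : ℂ) * b s = 0 := by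
    simp only [hi]
    rw [← Fintype.sum_sum_type (f := fun i => (w i : ℂ) * ∑ s ∈ Q, (expo s i : ℂ) * b s)]
    simp only [Finset.mul_sum]
    rw [Finset.sum_comm]
    refine Finset.sum_eq_zero fun s hs => ?_
    simp only [← mul_assoc, ← Finset.sum_mul]
    have := congrArg (Int.cast : ℤ → ℂ) (hw s hs)
    push_cast at this
    rw [this, zero_mul]
  simpa [hj] using h1

/-- Initial systems of nonnegative weights with zero `x`-part. The `n + k` linear conditions on
`(b, u)` are independent, whereas the torus acts through at most `n + k - 1` coordinates because
`λ_{j₀}` does not occur. -/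
lemma generic_zero (hA : ∀ j, (A j).Nonempty) (J : Finset (Fin k)) (j₀ : Fin k) (hj₀ : j₀ ∉ J) :
    Generic (fun t : Idx A ⊕ Fin n → ℂ => ∀ y : Fin n ⊕ Fin k → ℂ, (∀ i, y i ≠ 0) →
      (∀ j, ∑ α : {α // α ∈ A j}, t (Sum.inl ⟨j, α⟩) * ∏ i, y (Sum.inl i) ^ α.1 i = 0) →
      ¬ ∀ i, t (Sum.inr i) = ∑ s with s.1 ∈ J, (expo s (Sum.inl i) : ℂ) *
        (t (Sum.inl s) * ∏ i, y i ^ expo s i)) := by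
  classical
  let α₀ : ∀ j, {α // α ∈ A j} := fun j => ⟨(hA j).choose, (hA j).choose_spec⟩
  let Φ₁ : (Idx A ⊕ Fin n → ℂ) →ₗ[ℂ] (Fin n → ℂ) := LinearMap.pi fun i =>
    LinearMap.proj (Sum.inr i) -
      ∑ s with s.1 ∈ J, (expo s (Sum.inl i) : ℂ) • LinearMap.proj (Sum.inl s)
  let Φ₂ : (Idx A ⊕ Fin n → ℂ) →ₗ[ℂ] (Fin k → ℂ) := LinearMap.pi fun j =>
    ∑ α : {α // α ∈ A j}, LinearMap.proj (Sum.inl ⟨j, α⟩)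
  let Φ := Φ₁.prod Φ₂
  have hΦ₁ : ∀ v i, Φ₁ v i = v (Sum.inr i) -
      ∑ s with s.1 ∈ J, (expo s (Sum.inl i) : ℂ) * v (Sum.inl s) := by
    intro v i; simp [Φ₁]
  have hΦ₂ : ∀ v j, Φ₂ v j = ∑ α : {α // α ∈ A j}, v (Sum.inl ⟨j, α⟩) := by
    intro v j; simp [Φ₂]
  have hsurj : Function.Surjective Φ := by
    rintro ⟨a, b⟩
    let v₁ : Idx A → ℂ := fun s => if s.2 = α₀ s.1 then b s.1 else 0
    refine ⟨Sum.elim v₁ fun i =>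
      a i + ∑ s with s.1 ∈ J, (expo s (Sum.inl i) : ℂ) * v₁ s, Prod.ext ?_ ?_⟩
    · funext i
      change Φ₁ _ i = _
      rw [hΦ₁]
      simp
    · funext j
      change Φ₂ _ j = _
      rw [hΦ₂]
      simp [v₁]
  have hker : Module.finrank ℂ (LinearMap.ker Φ) + (n + k) = Fintype.card (Idx A ⊕ Fin n) := by
    have h := Φ.finrank_range_add_finrank_ker
    rw [LinearMap.range_eq_top.2 hsurj, finrank_top, Module.finrank_prod,
      Module.finrank_fintype_fun_eq_card, Module.finrank_fintype_fun_eq_card,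
      Module.finrank_fintype_fun_eq_card, Fintype.card_fin, Fintype.card_fin] at h
    omega
  -- For `j ∉ J` the variable `λ_j` is omitted, so its row is zero.
  let β : Fin n ⊕ Fin k → Idx A ⊕ Fin n → ℕ := fun i =>
    Sum.elim (fun s => i.elim (fun i => s.2.1 i) (fun j => if s.1 = j ∧ j ∈ J then 1 else 0))
      (fun _ => 0)
  have hdim : Module.finrank ℂ (Submodule.span ℂ
      (insert (1 : Idx A ⊕ Fin n → ℂ) (Set.range fun i s => (β i s : ℂ)))) ≤ n + k := by
    -- The zero row `j₀` makes room for the all-ones vector among `n + k` spanning vectors.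
    let r : Fin n ⊕ Fin k → Idx A ⊕ Fin n → ℂ :=
      Function.update (fun i s => (β i s : ℂ)) (Sum.inr j₀) 1
    have hle : Submodule.span ℂ (insert (1 : Idx A ⊕ Fin n → ℂ)
        (Set.range fun i s => (β i s : ℂ))) ≤ Submodule.span ℂ (Set.range r) := by
      rw [Submodule.span_le]
      rintro _ (rfl | ⟨i, rfl⟩)
      · exact Submodule.subset_span ⟨Sum.inr j₀, by simp [r]⟩
      · by_cases hi : i = Sum.inr j₀
        · have : (fun s => (β i s : ℂ)) = 0 := by
            funext s
            subst hi
            rcases s with s | s <;> simp [β, hj₀]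
          simp only [this, SetLike.mem_coe, zero_mem]
        · exact Submodule.subset_span ⟨i, by simp [r, hi]⟩
    refine (Submodule.finrank_mono hle).trans ((finrank_range_le_card r).trans ?_)
    simp
  have : Nonempty (Idx A ⊕ Fin n) := ⟨Sum.inl ⟨j₀, α₀ j₀⟩⟩
  refine (generic_torus (LinearMap.ker Φ) β (by omega)).mono fun t ht y hy h2 h1 => ht y hy ?_
  have hin : ∀ s : Idx A, ∏ i, y i ^ β i (Sum.inl s) =
      (∏ i, y (Sum.inl i) ^ s.2.1 i) * if s.1 ∈ J then y (Sum.inr s.1) else 1 := by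
    intro s
    rw [Fintype.prod_sum_type]
    congr 1
    simp only [β, Sum.elim_inl, Sum.elim_inr, pow_ite, pow_one, pow_zero]
    by_cases hs : s.1 ∈ J
    · rw [Finset.prod_eq_single s.1]
      · simp [hs]
      · intro j _ hj
        rw [if_neg fun h => hj h.1.symm]
      · simp
    · rw [if_neg hs]
      exact Finset.prod_eq_one fun j _ => if_neg (by rintro ⟨rfl, h⟩; exact hs h)
  rw [LinearMap.mem_ker]
  refine Prod.ext (funext fun i => ?_) (funext fun j => ?_)
  · change Φ₁ _ i = 0
    rw [hΦ₁, sub_eq_zero]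
    simp only [hin]
    have : ∏ i', y i' ^ β i' (Sum.inr i) = 1 := Finset.prod_eq_one fun i' _ => by simp [β]
    rw [this, mul_one, h1 i]
    refine Finset.sum_congr rfl fun s hs => ?_
    rw [Finset.mem_filter] at hs
    rw [if_pos hs.2, prod_expo]
  · change Φ₂ _ j = 0
    rw [hΦ₂]
    simp only [hin]
    rw [Finset.sum_congr rfl fun α _ => (mul_assoc _ _ _).symm, ← Finset.sum_mul, h2 j, zero_mul]

end

/-! ### Reduction of an arbitrary weight to the three types -/

/-- for finite nonempty supports all of whose exponents have every
coordinate `≥ 1`, there is a nonzero polynomial `G` in the coefficients and data such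
that whenever `G(c,u) ≠ 0`, for every nonzero `w ∈ ℤ^{n+k}` the initial system
`init_w(L(F))` has no solutions in `(ℂ*)^{n+k}`. -/
theorem statement12 (n k : ℕ)
    (A : Fin k → Finset (Fin n →₀ ℕ)) (hA : ∀ j, (A j).Nonempty)
    (hA1 : ∀ j, ∀ α ∈ A j, ∀ i, 1 ≤ α i) :
    ∃ G : MvPolynomial ((Fin k × (Fin n →₀ ℕ)) ⊕ Fin n) ℂ, G ≠ 0 ∧
      ∀ (c : Fin k → (Fin n →₀ ℕ) → ℂ) (u : Fin n → ℂ),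
        eval (Sum.elim (fun p : Fin k × (Fin n →₀ ℕ) => c p.1 p.2) u) G ≠ 0 →
          ∀ w : Fin n ⊕ Fin k → ℤ, w ≠ 0 →
            ¬ ∃ p : Fin n ⊕ Fin k → ℂ, (∀ i, p i ≠ 0) ∧
                (∀ i, eval p (initw w
                  (mlEll n k (fun j => sparsePoly n (A j) (c j)) u i)) = 0) ∧
                (∀ j, eval p (initw w
                  (rename Sum.inl (sparsePoly n (A j) (c j)))) = 0) := by
  classical
  -- `ρ s` is the variable of `G` standing for the coefficient of index `s`.
  let ρ : Idx A → (Fin k × (Fin n →₀ ℕ)) ⊕ Fin n := fun s => Sum.inl (s.1, s.2.1)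
  have hρ : Function.Injective ρ := by
    rintro ⟨j, α, hα⟩ ⟨j', α', hα'⟩ h
    simp only [ρ, Sum.inl.injEq, Prod.mk.injEq] at h
    obtain ⟨rfl, rfl⟩ := h
    rfl
  have hρu : Function.Injective (Sum.elim ρ Sum.inr) :=
    hρ.sumElim Sum.inr_injective (by intro a b h; simp [ρ] at h)
  have key :=
    (Generic.all fun s : Idx A => Generic.coord_ne_zero (ρ s)).and <|
    (Generic.all fun i : Fin n => Generic.coord_ne_zero
      (Sum.inr i : (Fin k × (Fin n →₀ ℕ)) ⊕ Fin n)).and <|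
    (Generic.all fun Q : Finset (Idx A) => Generic.imp fun hQ : Q.Nonempty =>
      (generic_neg Q hQ).comp hρ).and <|
    (Generic.all fun Q : Finset (Idx A) => (generic_lin_class Q).comp
      (Sum.inr_injective (α := Fin k × (Fin n →₀ ℕ)))).and <|
    (Generic.all fun J : Finset (Fin k) => Generic.all fun j₀ => Generic.imp fun h : j₀ ∉ J =>
      (generic_zero hA J j₀ h).comp hρu)
  obtain ⟨G, hG, h⟩ := key
  refine ⟨G, hG, fun c u hcu w hw => ?_⟩
  obtain ⟨hc, hu, hneg, hlin, hzero⟩ := h _ hcu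
  rintro ⟨y, hy, hℓ, hf⟩
  simp only [ρ, Sum.elim_inl] at hc
  simp only [Sum.elim_inr] at hu
  let a : Idx A → ℂ := fun s => c s.1 s.2.1
  let wt : Idx A → ℤ := fun s => ∑ i, w i * (expo s i : ℤ)
  have hwt : ∀ s, wt s = ∑ i, w (Sum.inl i) * (s.2.1 i : ℤ) + w (Sum.inr s.1) := sum_expo w
  let Q : Finset (Idx A) := Finset.univ.filter fun s => wt s ≤ 0 ∧ ∀ s', wt s ≤ wt s'
  have hQ : ∀ s, s ∈ Q ↔ wt s ≤ 0 ∧ ∀ s', wt s ≤ wt s' := fun s => by simp [Q]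
  have H1 : ∀ i, (if ∀ s, 0 ≤ wt s then u i else 0) =
      ∑ s ∈ Q, (expo s (Sum.inl i) : ℂ) * (a s * ∏ x, y x ^ expo s x) := by
    intro i
    have h := hℓ i
    have hD : Function.Injective fun o : Option (Idx A) => o.elim 0 expo := by
      have hne : ∀ s : Idx A, expo s ≠ 0 := fun s h => by
        have := DFunLike.congr_fun h (Sum.inr s.1)
        simp [expo_inr] at this
      rintro (_ | s) (_ | s') h
      · rfl
      · exact absurd h.symm (hne s')
      · exact absurd h (hne s)
      · exact congrArg some (expo_injective h)
    rw [mlEll_eq hA1, eval_initw w _ hD, Finset.sum_filter, Fintype.sum_option] at h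
    · have e0 : ∀ s : Idx A, ∑ i, w i * ((expo s i : ℕ) : ℤ) = wt s := fun _ => rfl
      simp only [Option.forall, Option.elim, Finsupp.coe_zero, Pi.zero_apply, Nat.cast_zero,
        mul_zero, Finset.sum_const_zero, le_refl, true_and, pow_zero, Finset.prod_const_one,
        mul_one, e0] at h
      rw [add_eq_zero_iff_eq_neg] at h
      rw [h, ← Finset.sum_neg_distrib, Finset.sum_filter]
      refine Finset.sum_congr rfl fun s _ => ?_
      rw [expo_inl]
      split_ifs
      · simp only [a]; ring
      · simp
    · rintro (_ | s)
      · exact hu i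
      · have h1 := hA1 s.1 s.2.1 s.2.2 i
        exact neg_ne_zero.2 (mul_ne_zero (Nat.cast_ne_zero.2 (by omega)) (hc s))
  have H2 : ∀ j, ∑ α : {α // α ∈ A j} with ∀ α' : {α // α ∈ A j},
      wt ⟨j, α⟩ ≤ wt ⟨j, α'⟩, c j α.1 * ∏ i, y (Sum.inl i) ^ α.1 i = 0 := by
    intro j
    have h := hf j
    rw [sparse_eq, eval_initw w (fun α : {α // α ∈ A j} => Finsupp.mapDomain Sum.inl α.1)
      ((Finsupp.mapDomain_injective Sum.inl_injective).comp Subtype.val_injective) _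
      (fun α => hc ⟨j, α⟩)] at h
    have e1 : ∀ α : {α // α ∈ A j}, ∏ i, y i ^ (Finsupp.mapDomain Sum.inl α.1 :
        Fin n ⊕ Fin k →₀ ℕ) i = ∏ i, y (Sum.inl i) ^ α.1 i := fun α => by
      simp [Fintype.prod_sum_type, Finsupp.mapDomain_apply Sum.inl_injective,
        Finsupp.mapDomain_of_notMem_range]
    have e2 : ∀ α : {α // α ∈ A j}, ∑ i, w i * ((Finsupp.mapDomain Sum.inl α.1 :
        Fin n ⊕ Fin k →₀ ℕ) i : ℤ) = ∑ i, w (Sum.inl i) * (α.1 i : ℤ) := fun α => by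
      simp [Fintype.sum_sum_type, Finsupp.mapDomain_apply Sum.inl_injective,
        Finsupp.mapDomain_of_notMem_range]
    simp only [e1, e2] at h
    simpa only [hwt, add_le_add_iff_right] using h
  -- Within a block meeting `Q`, the terms in `Q` are those of the initial form of `f_j`.
  have H2' : ∀ j, ∑ s ∈ Q, (expo s (Sum.inr j) : ℂ) * (a s * ∏ x, y x ^ expo s x) = 0 := by
    intro j
    have e1 : ∑ s ∈ Q, (expo s (Sum.inr j) : ℂ) * (a s * ∏ x, y x ^ expo s x) =
        ∑ α : {α // α ∈ A j}, if (⟨j, α⟩ : Idx A) ∈ Q then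
          c j α.1 * (∏ i, y (Sum.inl i) ^ α.1 i) * y (Sum.inr j) else 0 := by
      rw [← Finset.univ_inter Q, ← Finset.sum_ite_mem, Finset.univ_inter, Fintype.sum_sigma,
        Fintype.sum_eq_single j]
      · refine Finset.sum_congr rfl fun α _ => ?_
        rw [expo_inr, prod_expo, if_pos rfl, Nat.cast_one, one_mul, mul_assoc]
      · intro j' hj'
        refine Finset.sum_eq_zero fun α _ => ?_
        simp [expo_inr, hj']
    rw [e1]
    by_cases hex : ∃ α₀ : {α // α ∈ A j}, (⟨j, α₀⟩ : Idx A) ∈ Q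
    · obtain ⟨α₀, hα₀⟩ := hex
      rw [hQ] at hα₀
      have e2 : ∀ α : {α // α ∈ A j}, (⟨j, α⟩ : Idx A) ∈ Q ↔
          ∀ α' : {α // α ∈ A j}, wt ⟨j, α⟩ ≤ wt ⟨j, α'⟩ := by
        intro α
        rw [hQ]
        exact ⟨fun h α' => h.2 _, fun h => ⟨(h α₀).trans hα₀.1,
          fun s' => (h α₀).trans (hα₀.2 s')⟩⟩
      simp only [e2]
      rw [← Finset.sum_filter, ← Finset.sum_mul, H2 j, zero_mul]
    · push Not at hex
      exact Finset.sum_eq_zero fun α _ => if_neg (hex α)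
  by_cases hE : ∀ s, 0 ≤ wt s
  · simp only [if_pos hE] at H1
    by_cases hwx : ∃ i, w (Sum.inl i) ≠ 0
    · exact hlin Q ⟨w, hwx, fun s hs => le_antisymm ((hQ s).1 hs).1 (hE s)⟩ _ H2' H1
    · -- the torus part of `w` vanishes: every `f_j` is its own initial form
      push Not at hwx
      have hwt' : ∀ s, wt s = w (Sum.inr s.1) := fun s => by simp [hwt, hwx]
      have hw0 : ∀ j, 0 ≤ w (Sum.inr j) := fun j => by
        have := hE ⟨j, (hA j).choose, (hA j).choose_spec⟩
        rwa [hwt'] at this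
      obtain ⟨j₀, hj₀⟩ : ∃ j, w (Sum.inr j) ≠ 0 := by
        by_contra! hcon
        exact hw (funext fun x => x.rec hwx hcon)
      let J : Finset (Fin k) := Finset.univ.filter fun j => w (Sum.inr j) = 0
      refine hzero J j₀ (by simpa [J] using hj₀) y hy (fun j => ?_) (fun i => ?_)
      · have h := H2 j
        simp only [hwt', le_refl, implies_true, Finset.filter_true] at h
        exact h
      · have hQJ : Q = Finset.univ.filter fun s : Idx A => s.1 ∈ J := by
          ext s
          simp only [hQ, hwt', J, Finset.mem_filter, Finset.mem_univ, true_and]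
          refine ⟨fun h => le_antisymm h.1 (hw0 _), fun h => ?_⟩
          rw [h]
          exact ⟨le_rfl, fun s' => hw0 _⟩
        exact (H1 i).trans (by rw [hQJ]; rfl)
  · have hE' := hE
    push Not at hE'
    obtain ⟨s₀, hs₀⟩ := hE'
    have : Nonempty (Idx A) := ⟨s₀⟩
    obtain ⟨s₁, hs₁⟩ := Finite.exists_min wt
    simp only [if_neg hE] at H1
    exact hneg Q ⟨s₁, (hQ s₁).2 ⟨(hs₁ s₀).trans hs₀.le, hs₁⟩⟩ y hy
      fun i => i.rec (fun i => (H1 i).symm) H2'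
end

section
/- Fix positive integers n, k and finite nonempty supports A_1,…,A_k ⊆ ℕ^n. There exist a natural number d and a nonzero polynomial G in the coefficients c = (c_{j,α}) and the data u such that for every choice of coefficients and data with G(c,u) ≠ 0, the ML system L(F) of F = (f_1,…,f_k), f_j = Σ_{α∈A_j} c_{j,α} x^α, has exactly d solutions in ℂ^{n+k}. (Hence the ML degree of a general sparse polynomial system with supports A_• is well defined.) -/
/-!
The incidence variety of parameters `(c, u)` and solutions `(x, λ)` of the ML system, restricted to
`x ∈ (ℂ^*)^n`, is rational: after choosing an exponent `α_j ∈ A_j` for each `j`, the equation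
`f_j(x) = 0` can be solved for the coefficient `c_{j,α_j}`, because `x^{α_j}` is invertible, and the
likelihood equations give `u`. So its coordinate ring `S` is a localised polynomial ring in `x`, `λ`
and the other coefficients, and the transcendence degree of `S` over `ℂ` is the number of parameters
(`exists_generic_solution`). Working on the torus loses nothing: `ℓ_i = 0` with `u_i ≠ 0` forces
`x_i ≠ 0`.

If the parameters satisfy an algebraic relation `G` in `S`, then every system with a solution in the
torus has `G(c, u) = 0`, and generic systems have no solutions: `d = 0`. Otherwise the parameters
form a transcendence basis of the fraction field `L` of `S`, so all `x_i`, `λ_j` are algebraic over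
them, and the fibre over `(c, u)` consists of the specialisations of this generic point: the points
satisfying every polynomial relation which `(x, λ)` satisfies over the parameter ring `R`.

That such fibres have a constant cardinality is `generic_fibre`. In characteristic zero the
extension of `Frac R` generated by the coordinates has a primitive element `θ`. Only finitely many
denominators occur in its minimal polynomial `M`, in a Bézout identity for `M` and `M'`, and in the
expressions of the coordinates through `θ` and of `θ` through the coordinates. Away from these
denominators the fibre is in bijection with the roots of the specialisation of `M`, which is
separable, so it has `deg M` points (`ncard_of_split`).
-/


open MvPolynomial

/-! ### Fibres of a simple extension -/

/-- The fibre count when no denominators remain: `θ` has a minimal polynomial `M` with coefficients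
in `R`, coprime to its derivative over `R`, and the family `s` and `θ` are polynomial expressions of
each other over `R`. The points over `p : R →+* ℂ` satisfying all relations of `s` then correspond
to the roots of the specialisation of `M` along `p`, through `t ↦ (P i)(t)` with inverse `Θ`. -/
theorem ncard_of_split {R K L ι : Type*} [CommRing R] [Field K] [Field L] [Algebra R K]
    [Algebra K L] [Algebra R L] [IsScalarTower R K L]
    (hRK : Function.Injective (algebraMap R K)) (s : ι → L) (θ : L)
    (M : Polynomial R) (hM : M.Monic) (hMθ : M.map (algebraMap R K) = minpoly K θ)
    (a b : Polynomial R) (hab : a * M + b * Polynomial.derivative M = 1)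
    (P : ι → Polynomial R) (hP : ∀ i, Polynomial.aeval θ (P i) = s i)
    (Θ : MvPolynomial ι R) (hΘ : aeval s Θ = θ) (p : R →+* ℂ) :
    {x : ι → ℂ | ∀ F : MvPolynomial ι R, aeval s F = 0 → eval₂ p x F = 0}.Finite ∧
    {x : ι → ℂ | ∀ F : MvPolynomial ι R, aeval s F = 0 → eval₂ p x F = 0}.ncard
      = M.natDegree := by
  have hMzero : Polynomial.aeval θ M = 0 := by
    rw [← Polynomial.aeval_map_algebraMap K, hMθ, minpoly.aeval]
  -- `M` is monic, so over `R` already it divides every polynomial vanishing at `θ`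
  have key : ∀ t : ℂ, M.eval₂ p t = 0 → ∀ H : Polynomial R, Polynomial.aeval θ H = 0 →
      H.eval₂ p t = 0 := by
    intro t ht H hH
    have h1 : M ∣ H := by
      rw [← Polynomial.map_dvd_map (algebraMap R K) hRK hM, hMθ]
      exact minpoly.dvd K θ (by rwa [Polynomial.aeval_map_algebraMap])
    obtain ⟨Q, rfl⟩ := h1
    rw [Polynomial.eval₂_mul, ht, zero_mul]
  -- substituting polynomials commutes with evaluation, on both sides
  have sub1 : ∀ F : MvPolynomial ι R, Polynomial.aeval θ (aeval P F) = aeval s F := by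
    intro F
    rw [← AlgHom.comp_apply, comp_aeval]
    simp [hP]
  have sub2 : ∀ (F : MvPolynomial ι R) (t : ℂ),
      (aeval P F : Polynomial R).eval₂ p t = eval₂ p (fun i => (P i).eval₂ p t) F := by
    intro F t
    induction F using MvPolynomial.induction_on with
    | C r => simp
    | add f g hf hg => simp [hf, hg, Polynomial.eval₂_add]
    | mul_X f i hf => simp [hf, Polynomial.eval₂_mul]
  have sub3 : ∀ H : Polynomial R, aeval s (Polynomial.aeval Θ H) = Polynomial.aeval θ H := by
    intro H
    rw [← Polynomial.aeval_algHom_apply, hΘ]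
  have sub4 : ∀ (H : Polynomial R) (x : ι → ℂ),
      eval₂ p x (Polynomial.aeval Θ H) = H.eval₂ p (eval₂ p x Θ) := by
    intro H x
    rw [Polynomial.aeval_def, ← coe_eval₂Hom, Polynomial.hom_eval₂]
    congr 1
    ext r
    simp [algebraMap_eq]
  have hroot : ∀ t, M.eval₂ p t = 0 → eval₂ p (fun i => (P i).eval₂ p t) Θ = t := by
    intro t ht
    have := key t ht (aeval P Θ - Polynomial.X) (by rw [map_sub, sub1, hΘ]; simp)
    rw [Polynomial.eval₂_sub, sub2, Polynomial.eval₂_X] at this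
    exact sub_eq_zero.1 this
  have hne : M.map p ≠ 0 := (hM.map p).ne_zero
  have hset : {x : ι → ℂ | ∀ F : MvPolynomial ι R, aeval s F = 0 → eval₂ p x F = 0} =
      (fun t i => (P i).eval₂ p t) '' (M.map p).rootSet ℂ := by
    ext x
    simp only [Set.mem_ofPred_eq, Set.mem_image, Polynomial.mem_rootSet, Polynomial.coe_aeval_eq_eval,
      Polynomial.eval_map]
    constructor
    · intro hx
      refine ⟨eval₂ p x Θ, ⟨hne, ?_⟩, ?_⟩
      · rw [← sub4]
        exact hx _ (by rw [sub3, hMzero])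
      · funext i
        have := hx (Polynomial.aeval Θ (P i) - X i) (by rw [map_sub, sub3, hP, aeval_X, sub_self])
        rw [← coe_eval₂Hom, map_sub, coe_eval₂Hom, sub4, eval₂_X] at this
        exact sub_eq_zero.1 this
    · rintro ⟨t, ⟨-, ht⟩, rfl⟩ F hF
      rw [← sub2]
      exact key t ht _ (by rw [sub1, hF])
  rw [hset]
  refine ⟨(Set.toFinite _).image _, ?_⟩
  rw [Set.InjOn.ncard_image]
  · have hsep : (M.map p).Separable := by
      refine ⟨a.map p, b.map p, ?_⟩
      rw [Polynomial.derivative_map, ← Polynomial.map_mul, ← Polynomial.map_mul,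
        ← Polynomial.map_add, hab, Polynomial.map_one]
    have := Polynomial.card_rootSet_eq_natDegree (K := ℂ) hsep (IsAlgClosed.splits _)
    rw [← Nat.card_coe_set_eq, Nat.card_eq_fintype_card, this, hM.natDegree_map]
  · intro t ht t' ht' h
    simp only [Polynomial.mem_rootSet, Polynomial.coe_aeval_eq_eval, Polynomial.eval_map] at ht ht'
    rw [← hroot t ht.2, ← hroot t' ht'.2]
    exact congrArg (fun x => eval₂ p x Θ) h

/-! ### Generic fibres -/

/-- The primitive element theorem for the field generated by a finite algebraic family `s`, with
the mutual expressibility of `θ` and `s` recorded by polynomials over `K`. -/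
theorem exists_primitive_data {K L ι : Type*} [Field K] [CharZero K] [Field L] [Algebra K L]
    [Finite ι] (s : ι → L) (hs : ∀ i, IsIntegral K (s i)) :
    ∃ θ : L, IsIntegral K θ ∧ (∃ Θ : MvPolynomial ι K, aeval s Θ = θ) ∧
      ∃ P : ι → Polynomial K, ∀ i, Polynomial.aeval θ (P i) = s i := by
  let E := IntermediateField.adjoin K (Set.range s)
  have hs' : ∀ x ∈ Set.range s, IsIntegral K x := by rintro _ ⟨i, rfl⟩; exact hs i
  have : FiniteDimensional K E := IntermediateField.finiteDimensional_adjoin hs'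
  obtain ⟨α, hα⟩ := Field.exists_primitive_element K E
  have hαint : IsIntegral K α := IsIntegral.of_finite K α
  refine ⟨α, hαint.map E.val, ?_, ?_⟩
  · have h1 : (α : L) ∈ E.toSubalgebra := α.2
    rw [IntermediateField.adjoin_toSubalgebra_of_isAlgebraic
      (fun x hx => (hs' x hx).isAlgebraic), Algebra.adjoin_range_eq_range_aeval] at h1
    exact h1
  · have h : ∀ i, ∃ P : Polynomial K, Polynomial.aeval (α : L) P = s i := by
      intro i
      let y : E := ⟨s i, IntermediateField.subset_adjoin _ _ ⟨i, rfl⟩⟩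
      have h1 : y ∈ (IntermediateField.adjoin K {α}).toSubalgebra := by rw [hα]; trivial
      rw [IntermediateField.adjoin_simple_toSubalgebra_of_isAlgebraic hαint.isAlgebraic,
        Algebra.adjoin_singleton_eq_range_aeval] at h1
      obtain ⟨P, hP⟩ := h1
      refine ⟨P, ?_⟩
      replace hP : Polynomial.aeval α P = y := hP
      have := congrArg E.val hP
      exact (Polynomial.aeval_algHom_apply E.val α P).trans this
    choose P hP using h
    exact ⟨P, hP⟩

/-- Common denominators: finitely many elements of the fraction field `K` of `R` lie in `R[1/g]`
for a single nonzero `g`. -/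
theorem away_mem_range {R K : Type*} [CommRing R] [IsDomain R] [Field K] [Algebra R K]
    [IsFractionRing R K] (T : Finset K) :
    ∃ g : R, g ≠ 0 ∧ ∀ (R' : Type _) [CommRing R'] [Algebra R R'] [IsLocalization.Away g R']
      (f : R' →+* K) (_ : f.comp (algebraMap R R') = algebraMap R K),
      (T : Set K) ⊆ Set.range f := by
  obtain ⟨g, hg⟩ := IsLocalization.exist_integer_multiples_of_finset (nonZeroDivisors R) T
  refine ⟨g, nonZeroDivisors.coe_ne_zero g, ?_⟩
  intro R' _ _ _ f hf a ha
  obtain ⟨r, hr⟩ := hg a ha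
  have hgK : algebraMap R K g ≠ 0 :=
    IsFractionRing.to_map_ne_zero_of_mem_nonZeroDivisors g.2
  have hff : ∀ r, f (algebraMap R R' r) = algebraMap R K r := fun r => RingHom.congr_fun hf r
  refine ⟨algebraMap R R' r * IsLocalization.Away.invSelf (g : R), ?_⟩
  have h2 := congrArg f (IsLocalization.Away.mul_invSelf (S := R') (g : R))
  rw [map_mul, hff, map_one] at h2
  rw [map_mul, hff, hr, Algebra.smul_def]
  linear_combination a * h2

/-- Given a family `s` algebraic over a domain `R`, the set of specialisations of `s` along
`p : R →+* ℂ`, that is, of points satisfying the `p`-image of every relation of `s` over `R`, is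
finite of constant cardinality for all `p` outside the zero set of some nonzero `g`. The
denominators of a primitive element description are inverted to reduce to `ncard_of_split`. -/
theorem generic_fibre {R L ι : Type} [CommRing R] [IsDomain R] [Field L] [CharZero L] [Finite ι]
    (φ : R →+* L) (hφ : Function.Injective φ) (s : ι → L)
    (hs : ∀ i, ∃ Q : Polynomial R, Q ≠ 0 ∧ Q.eval₂ φ (s i) = 0) :
    ∃ d : ℕ, ∃ g : R, g ≠ 0 ∧ ∀ p : R →+* ℂ, p g ≠ 0 →
      {x : ι → ℂ | ∀ F : MvPolynomial ι R, eval₂ φ s F = 0 → eval₂ p x F = 0}.Finite ∧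
      {x : ι → ℂ | ∀ F : MvPolynomial ι R, eval₂ φ s F = 0 → eval₂ p x F = 0}.ncard = d := by
  classical
  have := Fintype.ofFinite ι
  let _ : Algebra R L := φ.toAlgebra
  have : FaithfulSMul R L := (faithfulSMul_iff_algebraMap_injective R L).2 hφ
  let K := FractionRing R
  let _ : Algebra K L := FractionRing.liftAlgebra R L
  have : IsScalarTower R K L := FractionRing.isScalarTower_liftAlgebra R L
  have : CharZero K := (algebraMap K L).charZero_iff (algebraMap K L).injective |>.2 inferInstance
  have hint : ∀ i, IsIntegral K (s i) := fun i =>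
    (IsAlgebraic.extendScalars (R := R) (S := K) (IsFractionRing.injective R K) (hs i)).isIntegral
  obtain ⟨θ, hθ, ⟨Θ, hΘ⟩, P, hP⟩ := exists_primitive_data s hint
  have hMmonic := minpoly.monic hθ
  obtain ⟨a, b, hab⟩ := (minpoly.irreducible hθ).separable
  let T : Finset K := (minpoly K θ).coeffs ∪ a.coeffs ∪ b.coeffs ∪ Θ.coeffs ∪
    Finset.univ.biUnion (fun i => (P i).coeffs)
  obtain ⟨g, hg0, hg⟩ := away_mem_range (R := R) T
  refine ⟨(minpoly K θ).natDegree, g, hg0, ?_⟩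
  intro p hp
  let R' := Localization.Away g
  have hgK : IsUnit (algebraMap R K g) :=
    ((map_ne_zero_iff _ (IsFractionRing.injective R K)).2 hg0).isUnit
  let f : R' →+* K := IsLocalization.Away.lift g hgK
  have hfc : f.comp (algebraMap R R') = algebraMap R K := IsLocalization.Away.lift_comp g hgK
  let _ : Algebra R' K := f.toAlgebra
  let _ : Algebra R' L := ((algebraMap K L).comp f).toAlgebra
  have : IsScalarTower R' K L := IsScalarTower.of_algebraMap_eq' rfl
  have hfL : ∀ r, algebraMap R' L (algebraMap R R' r) = φ r := by
    intro r
    change algebraMap K L (f (algebraMap R R' r)) = algebraMap R L r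
    rw [← RingHom.comp_apply f, hfc, ← IsScalarTower.algebraMap_apply]
  -- `R[1/g]` still embeds into `K`: `f z = 0` kills a numerator of `z`
  have hf : Function.Injective f := by
    rw [injective_iff_map_eq_zero]
    intro z hz
    obtain ⟨m, r, hr⟩ := IsLocalization.Away.surj g z
    have h1 := congrArg f hr
    rw [map_mul, hz, zero_mul, ← RingHom.comp_apply f, hfc] at h1
    have h2 : r = 0 := by
      rw [← map_eq_zero_iff _ (IsFractionRing.injective R K)]; exact h1.symm
    rw [h2, map_zero] at hr
    exact ((IsLocalization.Away.algebraMap_pow_isUnit (S := R') g m).mul_left_eq_zero).1 hr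
  have hT := hg R' f hfc
  have lift : ∀ Q : Polynomial K, Q.coeffs ⊆ T → ∃ Q' : Polynomial R', Q'.map f = Q := by
    intro Q hQ
    rw [← Polynomial.mem_lifts, Polynomial.lifts_iff_coeffs_subset_range]
    exact fun x hx => hT (hQ hx)
  obtain ⟨M', hM', hMdeg, hM'monic⟩ := Polynomial.lifts_and_natDegree_eq_and_monic
    ((Polynomial.mem_lifts _).2 (lift (minpoly K θ) (fun x hx => by
    simp only [T, Finset.mem_union]; tauto))) hMmonic
  obtain ⟨a', ha'⟩ := lift a (fun x hx => by
    simp only [T, Finset.mem_union]; tauto)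
  obtain ⟨b', hb'⟩ := lift b (fun x hx => by
    simp only [T, Finset.mem_union]; tauto)
  obtain ⟨P', hP'⟩ : ∃ P' : ι → Polynomial R', ∀ i, (P' i).map f = P i := by
    choose P' hP' using fun i => lift (P i) (fun x hx => by
      simp only [T, Finset.mem_union, Finset.mem_biUnion]
      exact Or.inr ⟨i, Finset.mem_univ _, hx⟩)
    exact ⟨P', hP'⟩
  obtain ⟨Θ', hΘ'⟩ : Θ ∈ Set.range (MvPolynomial.map f) := by
    rw [mem_range_map_iff_coeffs_subset]
    exact fun x hx => hT (by
      simp only [T, Finset.coe_union]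
      exact Or.inl (Or.inr hx))
  let pg : R' →+* ℂ := IsLocalization.Away.lift g (isUnit_iff_ne_zero.2 hp)
  have hpc : ∀ r, pg (algebraMap R R' r) = p r :=
    fun r => IsLocalization.Away.lift_eq g (isUnit_iff_ne_zero.2 hp) r
  have main := ncard_of_split (R := R') (K := K) (L := L) hf s θ M' hM'monic hM' a' b'
    (by
      apply Polynomial.map_injective f hf
      rw [Polynomial.map_add, Polynomial.map_mul, Polynomial.map_mul, ← Polynomial.derivative_map,
        hM', ha', hb', hab, Polynomial.map_one])
    P' (fun i => by rw [← hP i, ← hP' i]; exact (Polynomial.aeval_map_algebraMap K θ (P' i)).symm)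
    Θ' (by rw [← hΘ, ← hΘ']; exact (aeval_map_algebraMap K s Θ').symm) pg
  -- the fibre is unchanged when the base is enlarged to `R[1/g]`
  have hset : {x : ι → ℂ | ∀ F : MvPolynomial ι R, eval₂ φ s F = 0 → eval₂ p x F = 0} =
      {x : ι → ℂ | ∀ F : MvPolynomial ι R', aeval s F = 0 → eval₂ pg x F = 0} := by
    have e1 : ∀ F : MvPolynomial ι R, aeval s (map (algebraMap R R') F) = eval₂ φ s F := by
      intro F
      rw [aeval_def, eval₂_map]
      congr 1
      ext r; exact hfL r
    have e2 : ∀ (F : MvPolynomial ι R) x, eval₂ pg x (map (algebraMap R R') F) = eval₂ p x F := by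
      intro F x
      rw [eval₂_map]
      congr 1
      ext r; exact hpc r
    ext x
    simp only [Set.mem_ofPred_eq]
    constructor
    -- a relation over `R[1/g]` becomes one over `R` after multiplication by a power of `g`
    · intro hx F hF
      let _ : Algebra (MvPolynomial ι R) (MvPolynomial ι R') := algebraMvPolynomial
      obtain ⟨⟨F0, c⟩, hF0⟩ := IsLocalization.surj
        ((Submonoid.powers g).map (C : R →+* MvPolynomial ι R)) F
      obtain ⟨_, ⟨r, hr, rfl⟩⟩ := c
      simp only [algebraMap_def] at hF0
      have h0 : eval₂ φ s F0 = 0 := by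
        rw [← e1, ← hF0, map_mul, hF, zero_mul]
      have h1 := hx F0 h0
      rw [← e2, ← hF0, eval₂_mul, map_C, eval₂_C, hpc] at h1
      refine (mul_eq_zero.1 h1).resolve_right ?_
      obtain ⟨m, rfl⟩ := hr
      simpa using fun h => absurd h hp
    · intro hx F hF
      rw [← e2]
      exact hx _ (by rw [e1, hF])
  rw [hset, ← hMdeg]
  exact main

/-! ### The ML system over a commutative ring and its generic solution -/

section Incidence
variable {n k : ℕ} {A : Fin k → Finset (Fin n →₀ ℕ)}

/-- The monomial `x^α` evaluated at a point `x` of any commutative ring. -/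
def mlMon {B : Type*} [CommRing B] (x : Fin n → B) (α : Fin n →₀ ℕ) : B := ∏ i, x i ^ α i

/-- The left-hand side `u_i - Σ_j λ_j Σ_α c_{j,α} α_i x^α` of the `i`-th likelihood equation of the
ML system, over any commutative ring; here `x_i ∂x^α/∂x_i` is written as `α_i x^α`. -/
def mlEq {B : Type*} [CommRing B] (c : (Σ j, {α // α ∈ A j}) → B) (u x : Fin n → B)
    (l : Fin k → B) (i : Fin n) : B :=
  u i - ∑ j, l j * ∑ α : {α // α ∈ A j}, c ⟨j, α⟩ * (α.1 i : B) * mlMon x α.1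

/-- The value `f_j(x) = Σ_α c_{j,α} x^α` over any commutative ring. -/
def supEq {B : Type*} [CommRing B] (c : (Σ j, {α // α ∈ A j}) → B) (x : Fin n → B)
    (j : Fin k) : B :=
  ∑ α : {α // α ∈ A j}, c ⟨j, α⟩ * mlMon x α.1

theorem map_mlMon {B B' : Type*} [CommRing B] [CommRing B'] (f : B →+* B') (x : Fin n → B)
    (α : Fin n →₀ ℕ) : f (mlMon x α) = mlMon (fun i => f (x i)) α := by
  simp [mlMon]

theorem map_mlEq {B B' : Type*} [CommRing B] [CommRing B'] (f : B →+* B')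
    (c : (Σ j, {α // α ∈ A j}) → B) (u x : Fin n → B) (l : Fin k → B) (i : Fin n) :
    f (mlEq c u x l i) =
      mlEq (fun t => f (c t)) (fun i => f (u i)) (fun i => f (x i)) (fun j => f (l j)) i := by
  simp [mlEq, map_mlMon]

theorem map_supEq {B B' : Type*} [CommRing B] [CommRing B'] (f : B →+* B')
    (c : (Σ j, {α // α ∈ A j}) → B) (x : Fin n → B) (j : Fin k) :
    f (supEq c x j) = supEq (fun t => f (c t)) (fun i => f (x i)) j := by
  simp [supEq, map_mlMon]

/-- The Euler identity `x_i ∂x^α/∂x_i = α_i x^α`, which turns `ℓ_i` into the form used in `mlEq`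
without subtracting in exponents. -/
theorem mul_eval_pderiv_monomial (x : Fin n → ℂ) (α : Fin n →₀ ℕ) (r : ℂ) (i : Fin n) :
    x i * eval x (pderiv i (monomial α r)) = r * (α i : ℂ) * mlMon x α := by
  rw [pderiv_monomial, eval_monomial, Finsupp.prod_fintype _ _ (by simp), mlMon]
  rcases Nat.eq_zero_or_pos (α i) with h | h
  · simp [h]
  · have h1 : ∏ m, x m ^ α m = x i * ∏ m, x m ^ (α - Finsupp.single i 1 : Fin n →₀ ℕ) m := by
      rw [← Finset.mul_prod_erase _ _ (Finset.mem_univ i),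
        ← Finset.mul_prod_erase _ (fun m => x m ^ (α - Finsupp.single i 1 : Fin n →₀ ℕ) m) (Finset.mem_univ i),
        ← mul_assoc]
      congr 1
      · simp only [Finsupp.coe_tsub, Pi.sub_apply, Finsupp.single_eq_same]
        rw [← pow_succ', Nat.sub_add_cancel h]
      · refine Finset.prod_congr rfl fun m hm => ?_
        have : m ≠ i := Finset.ne_of_mem_erase hm
        simp [this.symm]
    rw [h1]; ring

theorem mem_mlSol_iff (c : Fin k → (Fin n →₀ ℕ) → ℂ) (u : Fin n → ℂ)
    (z : (Fin n → ℂ) × (Fin k → ℂ)) :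
    z ∈ mlSol n k (fun j => sparsePoly n (A j) (c j)) u ↔
      (∀ i, mlEq (A := A) (fun t => c t.1 t.2) u z.1 z.2 i = 0) ∧
      ∀ j, supEq (A := A) (fun t => c t.1 t.2) z.1 j = 0 := by
  have h1 : ∀ i, eval (Sum.elim z.1 z.2) (mlEll n k (fun j => sparsePoly n (A j) (c j)) u i) =
      mlEq (A := A) (fun t => c t.1 t.2) u z.1 z.2 i := by
    intro i
    simp only [mlEll, mlEq, map_sub, map_mul, map_sum, eval_C, eval_X, Sum.elim_inl, Sum.elim_inr,
      eval_rename, Sum.elim_comp_inl, sparsePoly]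
    rw [Finset.mul_sum]
    congr 1
    refine Finset.sum_congr rfl fun j _ => ?_
    rw [mul_left_comm, Finset.mul_sum, ← Finset.sum_coe_sort (A j)]
    simp only [mul_eval_pderiv_monomial]
  have h2 : ∀ j, eval z.1 (sparsePoly n (A j) (c j)) =
      supEq (A := A) (fun t => c t.1 t.2) z.1 j := by
    intro j
    rw [sparsePoly, supEq, map_sum, ← Finset.sum_coe_sort (A j)]
    refine Finset.sum_congr rfl fun α _ => ?_
    rw [eval_monomial, Finsupp.prod_fintype _ _ (by simp), mlMon]
  simp only [mlSol, Set.mem_ofPred_eq, h1, h2]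

/-- A generic point of the incidence variety over the torus: a domain `S` with a solution
`(c, u, x, l)` of the ML system of which every complex solution with `x' ∈ (ℂ^*)^n` is a
specialisation, and whose transcendence degree is the number of parameters `(c, u)`.

`S` is the polynomial ring in as many variables as there are parameters, with the product of the
variables `x_i` inverted. The variables indexed by the `n` data entries are the `x_i`. Among those
indexed by coefficients, the one with index `(j, α_j)` stands for `λ_j`, since `c_{j,α_j}` itself is
determined by `f_j(x) = 0`. -/
theorem exists_generic_solution (hA : ∀ j, (A j).Nonempty) :
    ∃ (S : Type) (_ : CommRing S) (_ : IsDomain S) (_ : Algebra ℂ S)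
      (c : (Σ j, {α // α ∈ A j}) → S) (u x : Fin n → S) (l : Fin k → S),
      (∀ i, mlEq c u x l i = 0) ∧ (∀ j, supEq c x j = 0) ∧
      Algebra.trdeg ℂ S = Cardinal.mk ((Σ j, {α // α ∈ A j}) ⊕ Fin n) ∧
      ∀ (c' : (Σ j, {α // α ∈ A j}) → ℂ) (u' x' : Fin n → ℂ) (l' : Fin k → ℂ),
        (∀ i, mlEq c' u' x' l' i = 0) → (∀ j, supEq c' x' j = 0) → (∀ i, x' i ≠ 0) →
        ∃ q : S →ₐ[ℂ] ℂ, (∀ t, q (c t) = c' t) ∧ (∀ i, q (u i) = u' i) ∧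
          (∀ i, q (x i) = x' i) ∧ (∀ j, q (l j) = l' j) := by
  classical
  let σ := (Σ j, {α // α ∈ A j}) ⊕ Fin n
  let Q := MvPolynomial σ ℂ
  let π : Q := ∏ i : Fin n, X (Sum.inr i)
  have hπ : π ≠ 0 := Finset.prod_ne_zero_iff.2 fun i _ => X_ne_zero _
  let S := Localization.Away π
  have hle : Submonoid.powers π ≤ nonZeroDivisors Q := powers_le_nonZeroDivisors_of_noZeroDivisors hπ
  have hdom : IsDomain S := IsLocalization.isDomain_localization hle
  choose α₀ hα₀ using hA
  let a : ∀ j, {α // α ∈ A j} := fun j => ⟨α₀ j, hα₀ j⟩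
  let y : (Σ j, {α // α ∈ A j}) → S := fun t => algebraMap Q S (X (Sum.inl t))
  let x : Fin n → S := fun i => algebraMap Q S (X (Sum.inr i))
  have hx : ∀ i, IsUnit (x i) := fun i =>
    IsLocalization.Away.isUnit_of_dvd π (Finset.dvd_prod_of_mem _ (Finset.mem_univ i))
  have hmon : ∀ α, IsUnit (mlMon x α) := fun α =>
    Finset.prod_induction _ IsUnit (fun _ _ => IsUnit.mul) isUnit_one fun i _ => (hx i).pow _
  let l : Fin k → S := fun j => y ⟨j, a j⟩
  -- `c_{j,α_j}` is the solution of `f_j(x) = 0`; the other coefficients are variables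
  let c : (Σ j, {α // α ∈ A j}) → S := fun t => if t.2 = a t.1 then
    -(Ring.inverse (mlMon x (α₀ t.1)) *
      ∑ β ∈ Finset.univ.erase (a t.1), y ⟨t.1, β⟩ * mlMon x β.1) else y t
  let u : Fin n → S := fun i =>
    ∑ j, l j * ∑ α : {α // α ∈ A j}, c ⟨j, α⟩ * (α.1 i : S) * mlMon x α.1
  have hsup : ∀ j, supEq c x j = 0 := by
    intro j
    rw [supEq, ← Finset.add_sum_erase _ _ (Finset.mem_univ (a j))]
    have h1 : ∑ β ∈ Finset.univ.erase (a j), c ⟨j, β⟩ * mlMon x β.1 =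
        ∑ β ∈ Finset.univ.erase (a j), y ⟨j, β⟩ * mlMon x β.1 := by
      refine Finset.sum_congr rfl fun β hβ => ?_
      simp only [c, if_neg (Finset.ne_of_mem_erase hβ)]
    rw [h1]
    simp only [c, if_true]
    have h2 := Ring.inverse_mul_cancel _ (hmon (α₀ j))
    linear_combination
      (-∑ β ∈ Finset.univ.erase (a j), y ⟨j, β⟩ * mlMon x β.1) * h2
  refine ⟨S, inferInstance, hdom, inferInstance, c, u, x, l, fun i => sub_self _, hsup, ?_, ?_⟩
  · have h1 : FaithfulSMul Q S :=
      (faithfulSMul_iff_algebraMap_injective Q S).2 (IsLocalization.injective S hle)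
    have h2 : Algebra.IsAlgebraic Q S := IsLocalization.isAlgebraic (R := Q) (S := S) (Submonoid.powers π)
    have h3 := trdeg_add_eq ℂ Q (A := S)
    rw [trdeg_eq_zero (R := Q) (A := S), add_zero, MvPolynomial.trdeg_of_isDomain] at h3
    rw [← h3, Cardinal.lift_id]
  · intro c' u' x' l' hml hsup' hx'
    -- the point of `Spec S` has `l'` in the slots `(j, α_j)` and `c'` in the other ones
    let z : σ → ℂ := Sum.elim (fun t => if t.2 = a t.1 then l' t.1 else c' t) x'
    have hunit : IsUnit (aeval z π : ℂ) := by
      rw [isUnit_iff_ne_zero, map_prod, Finset.prod_ne_zero_iff]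
      intro i _
      simpa [z] using hx' i
    let q : S →ₐ[ℂ] ℂ := IsLocalization.Away.liftAlgHom π (f := (aeval z : Q →ₐ[ℂ] ℂ)) hunit
    have hq : ∀ F : Q, q (algebraMap Q S F) = aeval z F := fun F =>
      IsLocalization.Away.lift_eq π hunit F
    have hqx : ∀ i, q (x i) = x' i := fun i => by
      change q (algebraMap Q S _) = _
      rw [hq]; simp [z]
    have hql : ∀ j, q (l j) = l' j := fun j => by
      change q (algebraMap Q S _) = _
      rw [hq]; simp [z]
    have hqc0 : ∀ t, t.2 ≠ a t.1 → q (c t) = c' t := by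
      intro t ht
      simp only [c, if_neg ht, y]
      rw [hq]; simp [z, ht]
    -- the remaining coefficient is pinned down by `f_j = 0`, since `x^α` is invertible
    have hqc : ∀ t, q (c t) = c' t := by
      rintro ⟨j, α⟩
      by_cases ht : α = a j
      · subst ht
        have h1 := congrArg q (hsup j)
        rw [map_zero] at h1
        have h1' := (map_supEq (q : S →+* ℂ) c x j).symm.trans h1
        have h2 := hsup' j
        simp only [RingHom.coe_coe, hqx] at h1'
        rw [supEq, ← Finset.add_sum_erase _ _ (Finset.mem_univ (a j))] at h1' h2
        have h3 : ∑ β ∈ Finset.univ.erase (a j), q (c ⟨j, β⟩) * mlMon x' β.1 =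
            ∑ β ∈ Finset.univ.erase (a j), c' ⟨j, β⟩ * mlMon x' β.1 := by
          refine Finset.sum_congr rfl fun β hβ => ?_
          rw [hqc0 ⟨j, β⟩ (Finset.ne_of_mem_erase hβ)]
        rw [h3] at h1'
        have h4 : mlMon x' (a j).1 ≠ 0 :=
          Finset.prod_ne_zero_iff.2 fun i _ => pow_ne_zero _ (hx' i)
        exact mul_right_cancel₀ h4 (add_right_cancel (h1'.trans h2.symm))
      · exact hqc0 ⟨j, α⟩ ht
    refine ⟨q, hqc, fun i => ?_, hqx, hql⟩
    have h1 : u' i = _ := sub_eq_zero.1 (hml i)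
    rw [h1]
    have h6 : ∀ m : ℕ, q (m : S) = m := fun m => map_natCast q m
    have h5 : ∀ α, q (mlMon x α) = mlMon x' α := fun α => by
      rw [← RingHom.coe_coe q, map_mlMon]; simp only [RingHom.coe_coe, hqx]
    simp only [u, map_sum, map_mul, hqc, hql, h5, h6]
end Incidence

/-! ### The number of solutions for general parameters -/

/-- If `L` has transcendence degree at most the size of a finite algebraically independent family
`v`, then `v` is a transcendence basis, and every element is a root of a nonzero polynomial over
the polynomial ring acting through `v`. -/
theorem exists_algebraic_relation {σ L : Type} [Finite σ] [Field L] [Algebra ℂ L] (v : σ → L)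
    (hv : AlgebraicIndependent ℂ v) (hL : Algebra.trdeg ℂ L ≤ Cardinal.mk σ) (y : L) :
    ∃ Q : Polynomial (MvPolynomial σ ℂ), Q ≠ 0 ∧
      Q.eval₂ (aeval v : MvPolynomial σ ℂ →ₐ[ℂ] L).toRingHom y = 0 := by
  have hb : IsTranscendenceBasis ℂ v := hv.isTranscendenceBasis_of_trdeg_le_of_finite hL
  have := hb.isAlgebraic
  let _ : Algebra (MvPolynomial σ ℂ) L := (aeval v : MvPolynomial σ ℂ →ₐ[ℂ] L).toRingHom.toAlgebra
  have h : IsAlgebraic (MvPolynomial σ ℂ) (RingHom.id L y) :=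
    (Algebra.IsAlgebraic.isAlgebraic (R := Algebra.adjoin ℂ (Set.range v)) y).ringHom_of_comp_eq
      (hv.aevalEquiv.symm : _ →+* MvPolynomial σ ℂ) (RingHom.id L) hv.aevalEquiv.symm.injective (by
        ext r
        obtain ⟨P, rfl⟩ := hv.aevalEquiv.surjective r
        simp only [RingHom.comp_apply, RingHom.coe_coe, AlgEquiv.symm_apply_apply, RingHom.id_apply]
        exact (hv.algebraMap_aevalEquiv P).symm)
  exact h

/-- Constancy of the number of solutions, with the coefficients indexed by the finite type of pairs
`(j, α)` with `α ∈ A j`, so that there are finitely many parameters. -/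
theorem generic_mlSol_finite_type (n k : ℕ) (A : Fin k → Finset (Fin n →₀ ℕ))
    (hA : ∀ j, (A j).Nonempty) :
    ∃ d : ℕ, ∃ G : MvPolynomial ((Σ j, {α // α ∈ A j}) ⊕ Fin n) ℂ, G ≠ 0 ∧
      ∀ (c : (Σ j, {α // α ∈ A j}) → ℂ) (u : Fin n → ℂ), eval (Sum.elim c u) G ≠ 0 →
        {z : (Fin n → ℂ) × (Fin k → ℂ) |
          (∀ i, mlEq c u z.1 z.2 i = 0) ∧ ∀ j, supEq c z.1 j = 0}.Finite ∧
        {z : (Fin n → ℂ) × (Fin k → ℂ) |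
          (∀ i, mlEq c u z.1 z.2 i = 0) ∧ ∀ j, supEq c z.1 j = 0}.ncard = d := by
  obtain ⟨S, _, _, _, C', U, X', Λ, hml, hsup, htr, huniv⟩ := exists_generic_solution hA
  let ψ : MvPolynomial ((Σ j, {α // α ∈ A j}) ⊕ Fin n) ℂ →ₐ[ℂ] S := aeval (Sum.elim C' U)
  have hψC : ∀ r, ψ (C r) = algebraMap ℂ S r := fun r => aeval_C _ r
  have hψX : ∀ t, ψ (X t) = Sum.elim C' U t := fun t => aeval_X _ t
  -- data with all `u_i ≠ 0` force the solutions to lie in the torus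
  let π : MvPolynomial ((Σ j, {α // α ∈ A j}) ⊕ Fin n) ℂ := ∏ i : Fin n, X (Sum.inr i)
  have hπ : π ≠ 0 := Finset.prod_ne_zero_iff.2 fun i _ => X_ne_zero _
  have hπu : ∀ (c : (Σ j, {α // α ∈ A j}) → ℂ) (u : Fin n → ℂ), eval (Sum.elim c u) π ≠ 0 →
      ∀ i, u i ≠ 0 := by
    intro c u h i
    rw [map_prod, Finset.prod_ne_zero_iff] at h
    simpa using h i (Finset.mem_univ i)
  have htorus : ∀ (c : (Σ j, {α // α ∈ A j}) → ℂ) (u x : Fin n → ℂ) (l : Fin k → ℂ),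
      (∀ i, u i ≠ 0) → (∀ i, mlEq c u x l i = 0) → ∀ i, x i ≠ 0 := by
    intro c u x l hu h i hxi
    apply hu i
    rw [sub_eq_zero.1 (h i)]
    refine Finset.sum_eq_zero fun j _ => mul_eq_zero_of_right _ (Finset.sum_eq_zero fun α _ => ?_)
    rcases Nat.eq_zero_or_pos (α.1 i) with h0 | h0
    · simp [h0]
    · have : mlMon x α.1 = 0 :=
        Finset.prod_eq_zero (Finset.mem_univ i) (by rw [hxi, zero_pow h0.ne'])
      rw [this, mul_zero]
  -- for such data every complex solution is a specialisation of the generic one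
  have hspec : ∀ (c : (Σ j, {α // α ∈ A j}) → ℂ) (u x : Fin n → ℂ) (l : Fin k → ℂ),
      (∀ i, u i ≠ 0) → (∀ i, mlEq c u x l i = 0) → (∀ j, supEq c x j = 0) →
      ∀ F : MvPolynomial (Fin n ⊕ Fin k) (MvPolynomial ((Σ j, {α // α ∈ A j}) ⊕ Fin n) ℂ),
        eval₂ (ψ : MvPolynomial ((Σ j, {α // α ∈ A j}) ⊕ Fin n) ℂ →+* S) (Sum.elim X' Λ) F = 0 →
          eval₂ (eval (Sum.elim c u)) (Sum.elim x l) F = 0 := by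
    intro c u x l hu h1 h2 F hF
    obtain ⟨q, hc, hu', hx, hl⟩ := huniv c u x l h1 h2 (htorus c u x l hu h1)
    have h3 := congrArg (q : S →+* ℂ) hF
    rw [map_zero, ← coe_eval₂Hom, ← RingHom.comp_apply, comp_eval₂Hom, coe_eval₂Hom] at h3
    rw [← h3]
    congr 1
    · apply MvPolynomial.ringHom_ext
      · intro r; simp [hψC]
      · rintro (t | i) <;> simp [hψX, hc, hu']
    · ext (i | j) <;> simp [hx, hl]
  -- `ψ` is injective iff the parameters of the generic solution are algebraically independent
  by_cases hinj : Function.Injective ψ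
  · let L := FractionRing S
    let v : (Σ j, {α // α ∈ A j}) ⊕ Fin n → L := fun t => algebraMap S L (Sum.elim C' U t)
    let φ : MvPolynomial ((Σ j, {α // α ∈ A j}) ⊕ Fin n) ℂ →+* L := (algebraMap S L).comp (ψ : MvPolynomial ((Σ j, {α // α ∈ A j}) ⊕ Fin n) ℂ →+* S)
    -- the parameters are a transcendence basis of `L`, so `x` and `λ` are algebraic over them
    have hφv : (aeval v : MvPolynomial ((Σ j, {α // α ∈ A j}) ⊕ Fin n) ℂ →ₐ[ℂ] L).toRingHom = φ := by
      apply MvPolynomial.ringHom_ext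
      · intro r; simp [φ, hψC, IsScalarTower.algebraMap_apply ℂ S L]
      · intro t; simp [φ, hψX, v]
    have hφ : Function.Injective φ := (IsFractionRing.injective S L).comp hinj
    have hv : AlgebraicIndependent ℂ v := by
      intro P Q hPQ
      apply hφ
      rw [← hφv]
      exact hPQ
    have hL : Algebra.trdeg ℂ L ≤ Cardinal.mk ((Σ j, {α // α ∈ A j}) ⊕ Fin n) := by
      have h2 : Algebra.IsAlgebraic S L := IsLocalization.isAlgebraic L (nonZeroDivisors S)
      have h3 := trdeg_add_eq ℂ S (A := L)
      rw [trdeg_eq_zero (R := S) (A := L), add_zero, htr] at h3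
      exact h3.symm.le
    have : CharZero L := charZero_of_injective_algebraMap (algebraMap ℂ L).injective
    obtain ⟨d, g, hg, hd⟩ := generic_fibre φ hφ
      (fun t : Fin n ⊕ Fin k => algebraMap S L (Sum.elim X' Λ t)) (fun t => by
        have := exists_algebraic_relation v hv hL (algebraMap S L (Sum.elim X' Λ t))
        rwa [hφv] at this)
    refine ⟨d, g * π, mul_ne_zero hg hπ, ?_⟩
    intro c u hcu
    rw [map_mul] at hcu
    have hu := hπu c u (right_ne_zero_of_mul hcu)
    have hd' := hd (eval (Sum.elim c u)) (left_ne_zero_of_mul hcu)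
    have hφ2 : ∀ F : MvPolynomial (Fin n ⊕ Fin k) (MvPolynomial ((Σ j, {α // α ∈ A j}) ⊕ Fin n) ℂ),
        eval₂ φ (fun t => algebraMap S L (Sum.elim X' Λ t)) F =
          algebraMap S L (eval₂ (ψ : MvPolynomial ((Σ j, {α // α ∈ A j}) ⊕ Fin n) ℂ →+* S) (Sum.elim X' Λ) F) := by
      intro F
      rw [← coe_eval₂Hom, ← coe_eval₂Hom, ← RingHom.comp_apply, comp_eval₂Hom]
    let e := Equiv.sumArrowEquivProdArrow (Fin n) (Fin k) ℂ
    have hset : {z : (Fin n → ℂ) × (Fin k → ℂ) |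
          (∀ i, mlEq c u z.1 z.2 i = 0) ∧ ∀ j, supEq c z.1 j = 0} =
        e '' {x | ∀ F, eval₂ φ (fun t => algebraMap S L (Sum.elim X' Λ t)) F = 0 →
          eval₂ (eval (Sum.elim c u)) x F = 0} := by
      ext ⟨x, l⟩
      simp only [Set.mem_ofPred_eq, Set.mem_image]
      constructor
      · rintro ⟨h1, h2⟩
        refine ⟨Sum.elim x l, fun F hF => hspec c u x l hu h1 h2 F ?_, rfl⟩
        rw [hφ2, map_eq_zero_iff _ (IsFractionRing.injective S L)] at hF
        exact hF
      · rintro ⟨w, hw, hwe⟩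
        have hx : x = fun i => w (Sum.inl i) := (congrArg Prod.fst hwe).symm
        have hl : l = fun i => w (Sum.inr i) := (congrArg Prod.snd hwe).symm
        subst hx hl
        -- the equations themselves are among the relations of the generic solution
        refine ⟨fun i => ?_, fun j => ?_⟩
        · have h := hw (mlEq (A := A) (fun t => C (X (Sum.inl t))) (fun i => C (X (Sum.inr i)))
            (fun i => X (Sum.inl i)) (fun j => X (Sum.inr j)) i) (by
              rw [hφ2, ← coe_eval₂Hom, map_mlEq]
              simp [hψX, hml])
          rw [← coe_eval₂Hom, map_mlEq] at h
          simpa using h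
        · have h := hw (supEq (A := A) (fun t => C (X (Sum.inl t)))
            (fun i => X (Sum.inl i)) j) (by
              rw [hφ2, ← coe_eval₂Hom, map_supEq]
              simp [hψX, hsup])
          rw [← coe_eval₂Hom, map_supEq] at h
          simpa using h
    rw [hset, Set.ncard_image_of_injective _ e.injective]
    exact ⟨hd'.1.image _, hd'.2⟩
  · -- the parameters of solvable systems satisfy a nontrivial equation
    obtain ⟨G, hG, hG0⟩ : ∃ G, ψ G = 0 ∧ G ≠ 0 := by
      rw [injective_iff_map_eq_zero] at hinj
      push Not at hinj
      exact hinj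
    refine ⟨0, G * π, mul_ne_zero hG0 hπ, ?_⟩
    intro c u hcu
    rw [map_mul] at hcu
    have hu := hπu c u (right_ne_zero_of_mul hcu)
    have hset : {z : (Fin n → ℂ) × (Fin k → ℂ) |
          (∀ i, mlEq c u z.1 z.2 i = 0) ∧ ∀ j, supEq c z.1 j = 0} = ∅ := by
      rw [Set.eq_empty_iff_forall_notMem]
      rintro ⟨x, l⟩ ⟨h1, h2⟩
      have h := hspec c u x l hu h1 h2 (C G) (by rw [eval₂_C]; exact hG)
      rw [eval₂_C] at h
      exact left_ne_zero_of_mul hcu h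
    rw [hset]
    exact ⟨Set.finite_empty, Set.ncard_empty _⟩

/-- for fixed positive `n, k` and finite nonempty supports, there exist
`d ∈ ℕ` and a nonzero polynomial `G` in the coefficients and data such that whenever
`G(c,u) ≠ 0`, the ML system `L(F)` has exactly `d` solutions in `ℂ^{n+k}`
(so the ML degree is well defined). -/
theorem statement13 (n k : ℕ) (hn : 0 < n) (hk : 0 < k)
    (A : Fin k → Finset (Fin n →₀ ℕ)) (hA : ∀ j, (A j).Nonempty) :
    ∃ d : ℕ, ∃ G : MvPolynomial ((Fin k × (Fin n →₀ ℕ)) ⊕ Fin n) ℂ, G ≠ 0 ∧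
      ∀ (c : Fin k → (Fin n →₀ ℕ) → ℂ) (u : Fin n → ℂ),
        eval (Sum.elim (fun p : Fin k × (Fin n →₀ ℕ) => c p.1 p.2) u) G ≠ 0 →
          (mlSol n k (fun j => sparsePoly n (A j) (c j)) u).Finite ∧
          (mlSol n k (fun j => sparsePoly n (A j) (c j)) u).ncard = d := by
  obtain ⟨d, G, hG, h⟩ := generic_mlSol_finite_type n k A hA
  -- `G` is read in all coefficients through the inclusion `e`; those off the supports are unused
  let e : (Σ j, {α // α ∈ A j}) ⊕ Fin n → (Fin k × (Fin n →₀ ℕ)) ⊕ Fin n :=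
    Sum.map (fun t => (t.1, t.2.1)) id
  have he : Function.Injective e := by
    refine Sum.map_injective.2 ⟨?_, Function.injective_id⟩
    rintro ⟨j, α, hα⟩ ⟨j', α', hα'⟩ h
    obtain ⟨rfl, rfl⟩ := Prod.mk.inj h
    rfl
  refine ⟨d, rename e G, (map_ne_zero_iff _ (rename_injective e he)).2 hG, ?_⟩
  intro c u hcu
  have hcomp : Sum.elim (fun p : Fin k × (Fin n →₀ ℕ) => c p.1 p.2) u ∘ e =
      Sum.elim (fun t : Σ j, {α // α ∈ A j} => c t.1 t.2) u := by
    ext (t | i) <;> rfl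
  rw [eval_rename, hcomp] at hcu
  have hset : mlSol n k (fun j => sparsePoly n (A j) (c j)) u =
      {z | (∀ i, mlEq (A := A) (fun t => c t.1 t.2) u z.1 z.2 i = 0) ∧
        ∀ j, supEq (A := A) (fun t => c t.1 t.2) z.1 j = 0} :=
    Set.ext fun z => mem_mlSol_iff c u z
  rw [hset]
  exact h _ u hcu
end
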